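/- arXiv:1503.03634 — 2 statements merged into one kernel-verified Lean document; each statement's English description precedes it below -/
import Mathlib

section
/- Let s be a complex number with Re(s) > 1 and for θ ∈ (0,π) set f_s(θ) := ∑_{n=1}^∞ (sin(nθ)/sin(θ)) · n^{−(s+1)}. Then the triple mean value (2/π) ∫₀^π f_s(θ)³ sin²(θ) dθ equals ∑_{m₁,m₂,m₃ ≥ 0} ((m₁+m₂+1)(m₂+m₃+1)(m₃+m₁+1))^{−(s+1)}. (This is the cubic moment ∫_{SU(2)} ζ_{SU(2)}(s,g)³ dg of the Witten L-function of SU(2), computed via the Weyl integration formula.) -/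
open Real

/-- The Witten L-function of SU(2) at the conjugacy class `[θ]`:
`f_s(θ) = ∑_{n≥1} (sin(nθ)/sin θ) n^{-(s+1)}`. -/
noncomputable def wittenL (s : ℂ) (θ : ℝ) : ℂ :=
  ∑' n : ℕ, ((Real.sin (((n : ℝ) + 1) * θ) / Real.sin θ : ℝ) : ℂ)
    * ((n : ℂ) + 1) ^ (-(s + 1))

/-!
By `U_real_cos` the characters of SU(2) are the Chebyshev polynomials `U n` in `cos θ`, so `f_s` is
a character series whose coefficients `(n + 1) ^ (-(s + 1))` are summable against the bound
`|U n| ≤ n + 1` on `[-1, 1]` as soon as `1 < re s`. The cube may therefore be expanded and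
integrated termwise. The Clebsch–Gordan rule and orthogonality make
`(2/π) ∫ U_a U_b U_c sin² θ` equal to `1` when `(a, b, c) = (m₁ + m₂, m₂ + m₃, m₃ + m₁)` for some
(necessarily unique) natural numbers `mᵢ`, and to `0` otherwise; only these triples survive, and
`m₁, m₂, m₃` parametrise the resulting sum.
-/

open Polynomial.Chebyshev

/-- Complex coefficients `a` define the class function `θ ↦ ∑ a n * U_n (cos θ)` on SU(2): by
`U_real_cos`, the Chebyshev value `U_n (cos θ)` is the character of `Sym^n` at `[θ]`, with the
quotient `sin ((n + 1) θ) / sin θ` continued to the zeros of `sin θ`. -/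
noncomputable def su2CharSeries (a : ℕ → ℂ) (θ : ℝ) : ℂ :=
  ∑' n : ℕ, a n * ((U ℝ n).eval (cos θ) : ℝ)

/-- The highest weights `(m₁ + m₂, m₂ + m₃, m₃ + m₁)`. By the Clebsch–Gordan rule these are exactly
the triples `(a, b, c)` for which `Sym^a ⊗ Sym^b ⊗ Sym^c` has an invariant vector. -/
def pairSums (m : ℕ × ℕ × ℕ) : ℕ × ℕ × ℕ :=
  (m.1 + m.2.1, m.2.1 + m.2.2, m.2.2 + m.1)

lemma pairSums_injective : Function.Injective pairSums := by
  rintro ⟨m₁, m₂, m₃⟩ ⟨n₁, n₂, n₃⟩ h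
  simp only [pairSums, Prod.mk.injEq] at h ⊢
  omega

section Chebyshev

lemma U_mul_U_natCast (R : Type*) [CommRing R] (a : ℤ) (n : ℕ) :
    U R a * U R n = ∑ k ∈ Finset.range (n + 1), U R (a + n - 2 * k) := by
  induction n using Nat.twoStepInduction with
  | zero => simp
  | one =>
    calc U R a * U R (1 : ℕ)
        = U R (a + 1) + U R (a - 1) := by
          rw [Nat.cast_one, U_one, U_add_one]
          ring
      _ = ∑ k ∈ Finset.range (1 + 1), U R (a + (1 : ℕ) - 2 * k) := by
          rw [Finset.sum_range_succ, Finset.sum_range_one]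
          push_cast
          ring_nf
  | more n ih₀ ih₁ =>
    have two_mul_X_mul_U (k : ℕ) : 2 * Polynomial.X * U R (a + (n + 1 : ℕ) - 2 * k) =
        U R (a + (n + 2 : ℕ) - 2 * k) + U R (a + n - 2 * k) := by
      have h := U_add_two R (a + n - 2 * k)
      rw [eq_sub_iff_add_eq] at h
      convert h.symm using 3 <;> push_cast <;> ring_nf
    calc U R a * U R (n + 2 : ℕ)
        = 2 * Polynomial.X * (U R a * U R (n + 1 : ℕ)) - U R a * U R n := by
          push_cast
          rw [U_add_two]
          ring
      _ = ∑ k ∈ Finset.range (n + 2), U R (a + (n + 2 : ℕ) - 2 * k) +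
            U R (a + n - 2 * (n + 1 : ℕ)) := by
          rw [ih₀, ih₁, Finset.mul_sum]
          simp_rw [two_mul_X_mul_U]
          rw [Finset.sum_add_distrib, Finset.sum_range_succ (fun k : ℕ => U R (a + n - 2 * k))]
          ring
      _ = ∑ k ∈ Finset.range (n + 2 + 1), U R (a + (n + 2 : ℕ) - 2 * k) := by
          rw [Finset.sum_range_succ _ (n + 2)]
          congr 2
          push_cast
          ring

theorem clebsch_gordan_U (R : Type*) [CommRing R] (a b : ℕ) :
    U R a * U R b = ∑ k ∈ Finset.range (min a b + 1), U R (a - k + (b - k) : ℕ) := by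
  wlog h : b ≤ a generalizing a b
  · rw [mul_comm, this b a (by omega), min_comm]
    simp_rw [add_comm]
  rw [U_mul_U_natCast, min_eq_right h]
  refine Finset.sum_congr rfl fun k hk => congrArg _ ?_
  have := Finset.mem_range.mp hk
  omega

lemma abs_eval_U_real_le (n : ℕ) {x : ℝ} (hx : |x| ≤ 1) : |(U ℝ n).eval x| ≤ n + 1 := by
  induction n with
  | zero => simp
  | succ n ih =>
    push_cast
    calc |(U ℝ (n + 1)).eval x|
        = |x * (U ℝ n).eval x + (T ℝ (n + 1)).eval x| := by simp [U_eq_X_mul_U_add_T]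
      _ ≤ |x| * |(U ℝ n).eval x| + |(T ℝ (n + 1)).eval x| := by
        simpa only [abs_mul] using abs_add_le (x * (U ℝ n).eval x) _
      _ ≤ 1 * (n + 1) + 1 := by
        gcongr
        exact abs_eval_T_real_le_one _ hx
      _ = n + 1 + 1 := by rw [one_mul]

lemma integral_cos_int_mul (m : ℤ) :
    ∫ θ in (0 : ℝ)..π, cos (m * θ) = if m = 0 then π else 0 := by
  split_ifs with h
  · simp [h]
  · simpa [integral_measureT_eq_integral_cos] using integral_eval_T_real_measureT_of_ne_zero h

lemma integral_U_mul_U_mul_sin_sq (p q : ℕ) :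
    ∫ θ in (0 : ℝ)..π, (U ℝ p).eval (cos θ) * (U ℝ q).eval (cos θ) * sin θ ^ 2 =
      if p = q then π / 2 else 0 := by
  have product_to_sum (θ : ℝ) : (U ℝ p).eval (cos θ) * (U ℝ q).eval (cos θ) * sin θ ^ 2 =
      (cos ((p - q : ℤ) * θ) - cos ((p + q + 2 : ℤ) * θ)) / 2 := by
    calc (U ℝ p).eval (cos θ) * (U ℝ q).eval (cos θ) * sin θ ^ 2
        = (2 * sin ((p + 1) * θ) * sin ((q + 1) * θ)) / 2 := by
          have hp := U_real_cos θ p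
          have hq := U_real_cos θ q
          push_cast at hp hq
          rw [← hp, ← hq]
          ring
      _ = (cos ((p - q : ℤ) * θ) - cos ((p + q + 2 : ℤ) * θ)) / 2 := by
          rw [two_mul_sin_mul_sin]
          push_cast
          ring_nf
  have cos_integrable (m : ℤ) :
      IntervalIntegrable (fun θ : ℝ => cos (m * θ)) MeasureTheory.volume 0 π :=
    Continuous.intervalIntegrable (by fun_prop) _ _
  simp_rw [product_to_sum]
  rw [intervalIntegral.integral_div, intervalIntegral.integral_sub (cos_integrable _)
    (cos_integrable _), integral_cos_int_mul, integral_cos_int_mul,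
    if_neg (by omega : (p + q + 2 : ℤ) ≠ 0), sub_zero]
  simp only [sub_eq_zero, Nat.cast_inj, ite_div, zero_div]

lemma integral_U_mul_U_mul_U_mul_sin_sq (a b c : ℕ) :
    ∫ θ in (0 : ℝ)..π,
        (U ℝ a).eval (cos θ) * (U ℝ b).eval (cos θ) * (U ℝ c).eval (cos θ) * sin θ ^ 2 =
      ∑ k ∈ Finset.range (min a b + 1), if a - k + (b - k) = c then π / 2 else 0 := by
  simp_rw [← Polynomial.eval_mul, clebsch_gordan_U, Finset.sum_mul, Polynomial.eval_finsetSum,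
    Polynomial.eval_mul, Finset.sum_mul]
  rw [intervalIntegral.integral_finsetSum fun k _ => Continuous.intervalIntegrable
    (by fun_prop) _ _]
  simp_rw [integral_U_mul_U_mul_sin_sq]

lemma integral_U_mul_U_mul_U_mul_sin_sq_eq_indicator (z : ℕ × ℕ × ℕ) :
    ∫ θ in (0 : ℝ)..π, (U ℝ z.1).eval (cos θ) * (U ℝ z.2.1).eval (cos θ) *
        (U ℝ z.2.2).eval (cos θ) * sin θ ^ 2 =
      (Set.range pairSums).indicator (fun _ => π / 2) z := by
  rw [integral_U_mul_U_mul_U_mul_sin_sq]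
  by_cases hz : z ∈ Set.range pairSums
  · rw [Set.indicator_of_mem hz]
    obtain ⟨⟨m₁, m₂, m₃⟩, rfl⟩ := hz
    dsimp only [pairSums]
    rw [Finset.sum_eq_single_of_mem m₂ (Finset.mem_range.mpr (by omega))]
    · exact if_pos (by omega)
    · intro k hk hne
      have := Finset.mem_range.mp hk
      exact if_neg (by omega)
  · rw [Set.indicator_of_notMem hz]
    refine Finset.sum_eq_zero fun k hk => if_neg fun hc => hz ⟨(z.1 - k, k, z.2.1 - k), ?_⟩
    have := Finset.mem_range.mp hk
    simp only [pairSums, Prod.ext_iff]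
    omega

end Chebyshev

section TermwiseIntegration

open MeasureTheory

variable {ι₁ ι₂ ι₃ R : Type*} [NormedRing R] [CompleteSpace R]

lemma hasSum_mul_mul_of_summable_norm {f : ι₁ → R} {g : ι₂ → R} {h : ι₃ → R}
    (hf : Summable fun i => ‖f i‖) (hg : Summable fun i => ‖g i‖)
    (hh : Summable fun i => ‖h i‖) :
    HasSum (fun z : ι₁ × ι₂ × ι₃ => f z.1 * (g z.2.1 * h z.2.2))
      ((∑' i, f i) * ((∑' i, g i) * ∑' i, h i)) := by
  rw [tsum_mul_tsum_of_summable_norm hg hh, tsum_mul_tsum_of_summable_norm hf (hg.mul_norm hh)]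
  exact (summable_mul_of_summable_norm hf (hg.mul_norm hh)).hasSum

lemma hasSum_integral_mul_mul_of_summable_bound [NormedSpace ℝ R] [Countable ι₁]
    [Countable ι₂] [Countable ι₃] {α : Type*} [MeasurableSpace α] {μ : Measure α}
    [IsFiniteMeasure μ] {f : ι₁ → α → R} {g : ι₂ → α → R} {h : ι₃ → α → R}
    {u : ι₁ → ℝ} {v : ι₂ → ℝ} {w : ι₃ → ℝ}
    (hf : ∀ i, AEStronglyMeasurable (f i) μ) (hg : ∀ i, AEStronglyMeasurable (g i) μ)
    (hh : ∀ i, AEStronglyMeasurable (h i) μ) (hfu : ∀ i x, ‖f i x‖ ≤ u i)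
    (hgv : ∀ i x, ‖g i x‖ ≤ v i) (hhw : ∀ i x, ‖h i x‖ ≤ w i)
    (hu : Summable u) (hv : Summable v) (hw : Summable w) :
    HasSum (fun z : ι₁ × ι₂ × ι₃ => ∫ x, f z.1 x * (g z.2.1 x * h z.2.2 x) ∂μ)
      (∫ x, (∑' i, f i x) * ((∑' i, g i x) * ∑' i, h i x) ∂μ) := by
  have summable_bound : Summable fun z : ι₁ × ι₂ × ι₃ => u z.1 * (v z.2.1 * w z.2.2) :=
    (hasSum_mul_mul_of_summable_norm hu.norm hv.norm hw.norm).summable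
  refine hasSum_integral_of_dominated_convergence
    (fun z _ => u z.1 * (v z.2.1 * w z.2.2))
    (fun z => (hf z.1).mul ((hg z.2.1).mul (hh z.2.2)))
    (fun z => .of_forall fun x =>
      norm_mul_le_of_le (hfu z.1 x) (norm_mul_le_of_le (hgv z.2.1 x) (hhw z.2.2 x)))
    (.of_forall fun _ => summable_bound) (integrable_const _) (.of_forall fun x => ?_)
  exact hasSum_mul_mul_of_summable_norm (hu.of_nonneg_of_le (fun _ => norm_nonneg _) (hfu · x))
    (hv.of_nonneg_of_le (fun _ => norm_nonneg _) (hgv · x))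
    (hw.of_nonneg_of_le (fun _ => norm_nonneg _) (hhw · x))

end TermwiseIntegration

lemma norm_mul_eval_U_cos_le (z : ℂ) (n : ℕ) (θ : ℝ) :
    ‖z * ((U ℝ n).eval (cos θ) : ℝ)‖ ≤ (n + 1) * ‖z‖ := by
  rw [norm_mul, Complex.norm_real, norm_eq_abs, mul_comm]
  gcongr
  exact abs_eval_U_real_le n (abs_cos_le_one θ)

lemma hasSum_integral_su2CharSeries_mul_mul {a b c : ℕ → ℂ}
    (ha : Summable fun n : ℕ => (n + 1) * ‖a n‖) (hb : Summable fun n : ℕ => (n + 1) * ‖b n‖)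
    (hc : Summable fun n : ℕ => (n + 1) * ‖c n‖) :
    HasSum (fun z : ℕ × ℕ × ℕ => a z.1 * b z.2.1 * c z.2.2 *
        ((∫ θ in (0 : ℝ)..π, (U ℝ z.1).eval (cos θ) * (U ℝ z.2.1).eval (cos θ) *
          (U ℝ z.2.2).eval (cos θ) * sin θ ^ 2 : ℝ) : ℂ))
      (∫ θ in (0 : ℝ)..π,
        su2CharSeries a θ * su2CharSeries b θ * su2CharSeries c θ * (sin θ : ℂ) ^ 2) := by
  have measurable_term (d : ℕ → ℂ) (n : ℕ) :
      Measurable fun θ : ℝ => d n * ((U ℝ n).eval (cos θ) : ℝ) := by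
    fun_prop
  have norm_weighted_le (n : ℕ) (θ : ℝ) :
      ‖c n * ((U ℝ n).eval (cos θ) : ℝ) * (sin θ : ℂ) ^ 2‖ ≤ (n + 1) * ‖c n‖ := by
    have hsin : ‖(sin θ : ℂ) ^ 2‖ ≤ 1 := by
      rw [norm_pow, Complex.norm_real, norm_eq_abs]
      exact pow_le_one₀ (abs_nonneg _) (abs_sin_le_one θ)
    simpa only [mul_one] using norm_mul_le_of_le (norm_mul_eval_U_cos_le (c n) n θ) hsin
  convert! hasSum_integral_mul_mul_of_summable_bound
    (μ := MeasureTheory.volume.restrict (Set.Ioc 0 π))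
    (fun n => (measurable_term a n).aestronglyMeasurable)
    (fun n => (measurable_term b n).aestronglyMeasurable)
    (h := fun n θ => c n * ((U ℝ n).eval (cos θ) : ℝ) * (sin θ : ℂ) ^ 2)
    (fun n => ((measurable_term c n).mul (by fun_prop)).aestronglyMeasurable)
    (fun n => norm_mul_eval_U_cos_le (a n) n) (fun n => norm_mul_eval_U_cos_le (b n) n)
    norm_weighted_le ha hb hc using 1
  · ext z
    rw [← intervalIntegral.integral_ofReal, ← intervalIntegral.integral_const_mul,
      intervalIntegral.integral_of_le pi_pos.le]
    congr 1 with θ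
    push_cast
    ring
  · rw [intervalIntegral.integral_of_le pi_pos.le]
    congr 1 with θ
    rw [tsum_mul_right]
    simp only [su2CharSeries]
    ring

theorem cubic_moment_general {a b c : ℕ → ℂ}
    (ha : Summable fun n : ℕ => (n + 1) * ‖a n‖) (hb : Summable fun n : ℕ => (n + 1) * ‖b n‖)
    (hc : Summable fun n : ℕ => (n + 1) * ‖c n‖) :
    HasSum (fun m : ℕ × ℕ × ℕ => a (m.1 + m.2.1) * b (m.2.1 + m.2.2) * c (m.2.2 + m.1))
      (2 / (π : ℂ) * ∫ θ in (0 : ℝ)..π,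
        su2CharSeries a θ * su2CharSeries b θ * su2CharSeries c θ * (sin θ : ℂ) ^ 2) := by
  have h := (hasSum_integral_su2CharSeries_mul_mul ha hb hc).mul_left (2 / (π : ℂ))
  simp_rw [integral_U_mul_U_mul_U_mul_sin_sq_eq_indicator] at h
  rw [← pairSums_injective.hasSum_iff fun z hz => by simp [Set.indicator_of_notMem hz]] at h
  convert! h using 2 with m
  have hπ : (π : ℂ) ≠ 0 := Complex.ofReal_ne_zero.mpr pi_ne_zero
  rw [Function.comp_apply, Set.indicator_of_mem (Set.mem_range_self m)]
  push_cast [pairSums]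
  field_simp

lemma wittenL_eq_su2CharSeries (s : ℂ) {θ : ℝ} (hθ : sin θ ≠ 0) :
    wittenL s θ = su2CharSeries (fun n => ((n : ℂ) + 1) ^ (-(s + 1))) θ := by
  refine tsum_congr fun n => ?_
  have hU := U_real_cos θ n
  push_cast at hU
  rw [← hU, mul_div_cancel_right₀ _ hθ, mul_comm]

lemma wittenL_pow_three_mul_sin_sq (s : ℂ) (θ : ℝ) :
    wittenL s θ ^ 3 * (sin θ : ℂ) ^ 2 =
      su2CharSeries (fun n => ((n : ℂ) + 1) ^ (-(s + 1))) θ ^ 3 * (sin θ : ℂ) ^ 2 := by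
  by_cases hθ : sin θ = 0
  · simp [hθ]
  · rw [wittenL_eq_su2CharSeries s hθ]

lemma summable_succ_mul_norm_succ_cpow {s : ℂ} (hs : 1 < s.re) :
    Summable fun n : ℕ => ((n : ℝ) + 1) * ‖((n : ℂ) + 1) ^ (-(s + 1))‖ := by
  refine ((summable_nat_add_iff 1).mpr (Complex.summable_one_div_nat_cpow.mpr hs)).norm.congr
    fun n => ?_
  have hn : ((n : ℂ) + 1) ≠ 0 := n.cast_add_one_ne_zero
  have norm_succ : ‖(n : ℂ) + 1‖ = n + 1 := by exact_mod_cast Complex.norm_natCast (n + 1)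
  rw [neg_add, ← sub_eq_add_neg, Complex.cpow_sub _ _ hn, Complex.cpow_one, Complex.cpow_neg,
    norm_div (_⁻¹), norm_succ, mul_div_cancel₀ _ (by positivity), one_div, Nat.cast_succ]

lemma natCast_mul_mul_cpow (x y z : ℕ) (r : ℂ) :
    ((x * y * z : ℕ) : ℂ) ^ r = (x : ℂ) ^ r * (y : ℂ) ^ r * (z : ℂ) ^ r := by
  rw [Nat.cast_mul, Complex.natCast_mul_natCast_cpow, Nat.cast_mul,
    Complex.natCast_mul_natCast_cpow]

/-- The cubic moment of the Witten L-function of SU(2): for `Re(s) > 1`,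
`(2/π) ∫₀^π f_s(θ)³ sin²θ dθ = ∑_{m₁,m₂,m₃ ≥ 0} ((m₁+m₂+1)(m₂+m₃+1)(m₃+m₁+1))^{-(s+1)}`. -/
theorem cubic_moment (s : ℂ) (hs : 1 < s.re) :
    (2 / (π : ℂ)) * ∫ θ in (0:ℝ)..π, (wittenL s θ) ^ 3 * ((Real.sin θ : ℂ)) ^ 2
      = ∑' m : ℕ × ℕ × ℕ,
          (((m.1 + m.2.1 + 1) * (m.2.1 + m.2.2 + 1) * (m.2.2 + m.1 + 1) : ℕ) : ℂ) ^ (-(s + 1)) := by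
  have ha := summable_succ_mul_norm_succ_cpow hs
  simp_rw [wittenL_pow_three_mul_sin_sq, pow_three', ← (cubic_moment_general ha ha ha).tsum_eq,
    natCast_mul_mul_cpow, Nat.cast_succ]
end

section
/- For every integer n ≥ 1, the integral (2/π) ∫₀^π sin(nθ)⁴/sin(θ)² dθ equals n. -/
open Real

/-!
Write `S n θ = sin (n θ) ^ 2 / sin θ ^ 2`, which off the zeros of `sin` is `n` times the Fejér
kernel at `2 θ`. That kernel is a trigonometric polynomial with constant term `1`, so `S n` has
integral `n π` over a period. Since `sin (2 n θ) ^ 2 = 4 sin (n θ) ^ 2 (1 - sin (n θ) ^ 2)`, the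
integrand is `S n - S (2 n) / 4`, with integral `n π - 2 n π / 4 = n π / 2`.
-/

/-- The Dirichlet kernel `∑_{|k| ≤ n} exp (i k x)`, written as a real cosine polynomial. -/
noncomputable def dirichletKernel (n : ℕ) (x : ℝ) : ℝ :=
  1 + 2 * ∑ k ∈ Finset.Icc 1 n, cos (k * x)

/-- The sum of the first `n` Dirichlet kernels, that is, `n` times the Fejér kernel. Leaving out
the factor `1 / n` avoids a special case at `n = 0`. -/
noncomputable def fejerSum (n : ℕ) (x : ℝ) : ℝ :=
  ∑ k ∈ Finset.range n, dirichletKernel k x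

lemma dirichletKernel_succ (n : ℕ) (x : ℝ) :
    dirichletKernel (n + 1) x = dirichletKernel n x + 2 * cos ((n + 1 : ℕ) * x) := by
  rw [dirichletKernel, dirichletKernel, Finset.sum_Icc_succ_top (by lia)]
  ring

lemma dirichletKernel_mul_sin_half (n : ℕ) (x : ℝ) :
    dirichletKernel n x * sin (x / 2) = sin ((n + 1 / 2) * x) := by
  induction n with
  | zero => simp [dirichletKernel, div_eq_inv_mul]
  | succ n ih =>
    have product_to_sum : 2 * cos ((n + 1 : ℕ) * x) * sin (x / 2)
        = sin (((n + 1 : ℕ) + 1 / 2) * x) - sin ((n + 1 / 2) * x) := by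
      rw [show ((n + 1 : ℕ) + 1 / 2) * x = (n + 1 : ℕ) * x + x / 2 by ring,
        show (n + 1 / 2) * x = (n + 1 : ℕ) * x - x / 2 by push_cast; ring, sin_add, sin_sub]
      ring
    rw [dirichletKernel_succ, add_mul, ih, product_to_sum]
    ring

lemma fejerSum_mul_sin_half_sq (n : ℕ) (x : ℝ) :
    fejerSum n x * sin (x / 2) ^ 2 = sin (n * x / 2) ^ 2 := by
  induction n with
  | zero => simp [fejerSum]
  | succ n ih =>
    have sin_sq_sub_sin_sq : sin ((n + 1 / 2) * x) * sin (x / 2)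
        = sin ((n + 1 : ℕ) * x / 2) ^ 2 - sin (n * x / 2) ^ 2 := by
      rw [show (n + 1 / 2) * x = n * x / 2 + (n * x / 2 + x / 2) by ring,
        show (n + 1 : ℕ) * x / 2 = n * x / 2 + x / 2 by push_cast; ring,
        sin_add, sin_add, cos_add]
      linear_combination -sin (n * x / 2) ^ 2 * sin_sq_add_cos_sq (x / 2)
    calc fejerSum (n + 1) x * sin (x / 2) ^ 2
        = fejerSum n x * sin (x / 2) ^ 2
            + dirichletKernel n x * sin (x / 2) * sin (x / 2) := by
          rw [fejerSum, Finset.sum_range_succ, ← fejerSum]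
          ring
      _ = sin ((n + 1 : ℕ) * x / 2) ^ 2 := by
          rw [ih, dirichletKernel_mul_sin_half, sin_sq_sub_sin_sq]
          ring

@[fun_prop]
lemma continuous_dirichletKernel (n : ℕ) : Continuous (dirichletKernel n) := by
  unfold dirichletKernel
  fun_prop

@[fun_prop]
lemma continuous_fejerSum (n : ℕ) : Continuous (fejerSum n) := by
  unfold fejerSum
  fun_prop

lemma integral_cos_nat_mul_period {k : ℕ} (hk : k ≠ 0) (a : ℝ) :
    ∫ x in a..a + 2 * π, cos (k * x) = 0 := by
  have sin_endpoints : sin (k * (a + 2 * π)) = sin (k * a) := by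
    rw [mul_add, sin_add_nat_mul_two_pi]
  rw [intervalIntegral.integral_comp_mul_left cos (Nat.cast_ne_zero.mpr hk), integral_cos,
    sin_endpoints, sub_self, smul_zero]

lemma integral_dirichletKernel (n : ℕ) (a : ℝ) :
    ∫ x in a..a + 2 * π, dirichletKernel n x = 2 * π := by
  have integral_cosines : ∫ x in a..a + 2 * π, ∑ k ∈ Finset.Icc 1 n, cos (k * x) = 0 := by
    rw [intervalIntegral.integral_finsetSum
      fun k _ ↦ Continuous.intervalIntegrable (by fun_prop) _ _]
    exact Finset.sum_eq_zero fun k hk ↦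
      integral_cos_nat_mul_period (Nat.one_le_iff_ne_zero.mp (Finset.mem_Icc.mp hk).1) a
  unfold dirichletKernel
  rw [intervalIntegral.integral_add (by simp) (Continuous.intervalIntegrable (by fun_prop) _ _),
    intervalIntegral.integral_const_mul, integral_cosines]
  simp

lemma integral_fejerSum (n : ℕ) (a : ℝ) :
    ∫ x in a..a + 2 * π, fejerSum n x = n * (2 * π) := by
  unfold fejerSum
  rw [intervalIntegral.integral_finsetSum
    fun k _ ↦ (continuous_dirichletKernel k).intervalIntegrable _ _]
  simp [integral_dirichletKernel]

lemma ae_sin_ne_zero : ∀ᵐ θ : ℝ, sin θ ≠ 0 := by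
  have zeros_countable : {θ : ℝ | sin θ = 0}.Countable :=
    (Set.countable_range fun k : ℤ ↦ k * π).mono fun _ ↦ sin_eq_zero_iff.mp
  exact zeros_countable.ae_notMem _

lemma fejerSum_two_mul_ae_eq (n : ℕ) :
    (fun θ ↦ fejerSum n (2 * θ)) =ᵐ[MeasureTheory.volume]
      fun θ ↦ sin (n * θ) ^ 2 / sin θ ^ 2 := by
  filter_upwards [ae_sin_ne_zero] with θ hθ
  have fejer := fejerSum_mul_sin_half_sq n (2 * θ)
  rw [mul_div_cancel_left₀ θ two_ne_zero, mul_left_comm,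
    mul_div_cancel_left₀ (n * θ) two_ne_zero] at fejer
  exact eq_div_of_mul_eq (pow_ne_zero 2 hθ) fejer

lemma intervalIntegrable_sin_nat_mul_sq_div_sin_sq (n : ℕ) (a b : ℝ) :
    IntervalIntegrable (fun θ ↦ sin (n * θ) ^ 2 / sin θ ^ 2) MeasureTheory.volume a b := by
  have fejer_integrable :
      IntervalIntegrable (fun θ ↦ fejerSum n (2 * θ)) MeasureTheory.volume a b :=
    Continuous.intervalIntegrable (by fun_prop) a b
  exact fejer_integrable.congr_ae (MeasureTheory.ae_restrict_of_ae (fejerSum_two_mul_ae_eq n))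

lemma integral_sin_nat_mul_sq_div_sin_sq (n : ℕ) (a : ℝ) :
    ∫ θ in a..a + π, sin (n * θ) ^ 2 / sin θ ^ 2 = n * π := by
  calc ∫ θ in a..a + π, sin (n * θ) ^ 2 / sin θ ^ 2
      = ∫ θ in a..a + π, fejerSum n (2 * θ) :=
        intervalIntegral.integral_congr_ae_restrict
          (MeasureTheory.ae_restrict_of_ae (fejerSum_two_mul_ae_eq n).symm)
    _ = 2⁻¹ * ∫ x in 2 * a..2 * a + 2 * π, fejerSum n x := by
        rw [intervalIntegral.integral_comp_mul_left (fejerSum n) two_ne_zero, mul_add, smul_eq_mul]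
    _ = n * π := by
        rw [integral_fejerSum]
        ring

lemma sin_pow_four_eq_sin_sq_sub (x : ℝ) :
    sin x ^ 4 = sin x ^ 2 - sin (2 * x) ^ 2 / 4 := by
  rw [sin_two_mul]
  linear_combination sin x ^ 2 * sin_sq_add_cos_sq x

theorem sin_fourth_integral_general (n : ℕ) (a : ℝ) :
    (2 / π) * ∫ θ in a..a + π, sin (n * θ) ^ 4 / sin θ ^ 2 = n := by
  have integrand_eq (θ : ℝ) : sin (n * θ) ^ 4 / sin θ ^ 2
      = sin (n * θ) ^ 2 / sin θ ^ 2 - sin ((2 * n : ℕ) * θ) ^ 2 / sin θ ^ 2 / 4 := by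
    rw [sin_pow_four_eq_sin_sq_sub, Nat.cast_mul, Nat.cast_two, mul_assoc]
    ring
  have integral_eq : ∫ θ in a..a + π, sin (n * θ) ^ 4 / sin θ ^ 2 = n * π / 2 := by
    simp_rw [integrand_eq]
    rw [intervalIntegral.integral_sub (intervalIntegrable_sin_nat_mul_sq_div_sin_sq n _ _)
        ((intervalIntegrable_sin_nat_mul_sq_div_sin_sq (2 * n) _ _).div_const 4),
      intervalIntegral.integral_div, integral_sin_nat_mul_sq_div_sin_sq,
      integral_sin_nat_mul_sq_div_sin_sq]
    push_cast
    ring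
  rw [integral_eq]
  field_simp

/-- For `n ≥ 1`, `(2/π) ∫₀^π sin(nθ)⁴/sin(θ)² dθ = n`. -/
theorem sin_fourth_integral (n : ℕ) (hn : 1 ≤ n) :
    (2 / π) * ∫ θ in (0:ℝ)..π, (Real.sin ((n : ℝ) * θ)) ^ 4 / (Real.sin θ) ^ 2
      = (n : ℝ) := by
  simpa using sin_fourth_integral_general n 0
end
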